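/- arXiv:1310.0650 — 2 statements merged into one kernel-verified Lean document; each statement's English description precedes it below -/
import Mathlib

section
/- Let X ⊆ S^ℕ be a sofic shift, i.e., a one-directional subshift whose language B(X) is a regular language. Then the winning shift W(X) ⊆ {A,B}^ℕ is a sofic shift. -/
/-!
Word games (Salo–Törmä, "Playing with Subshifts").
The players' alphabet is `Bool`: player `A` is `false`, player `B` is `true`
(so that the order `A < B` is the order `false < true` on `Bool`).
-/

/-- Auxiliary function for the play of a finite ordered word game: the word built so far
is accumulated in the second argument, and at each step the player indicated by the
turn order picks the next letter as a function of the word built so far. -/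
def playAux {S : Type*} (sA sB : List S → S) : List Bool → List S → List S
  | [], w => w
  | b :: rest, w => playAux sA sB rest (w ++ [(if b then sB else sA) w])

/-- The play of the finite ordered word game with turn order `a`,
where `A` uses strategy `sA` and `B` uses strategy `sB`. -/
def play {S : Type*} (sA sB : List S → S) (a : List Bool) : List S :=
  playAux sA sB a []

/-- The winning set `W(X)` of a target set `X` of finite words: the set of turn orders
for which `A` has a winning strategy. -/
def Wset {S : Type*} (X : Set (List S)) : Set (List Bool) :=
  { a | ∃ sA : List S → S, ∀ sB : List S → S, play sA sB a ∈ X }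

/-- The prefix of length `n` of the play of the infinite ordered word game with
turn order `a : ℕ → Bool`. -/
def playPref {S : Type*} (sA sB : List S → S) (a : ℕ → Bool) : ℕ → List S
  | 0 => []
  | n + 1 => playPref sA sB a n ++ [(if a n then sB else sA) (playPref sA sB a n)]

/-- The play of the infinite ordered word game: coordinate `i` is chosen by the player
`a i` as a function of the word `x_0 ⋯ x_{i-1}` built so far. -/
def playInf {S : Type*} (sA sB : List S → S) (a : ℕ → Bool) : ℕ → S :=
  fun i => (if a i then sB else sA) (playPref sA sB a i)

/-- The winning shift `W(X)` of a target set `X ⊆ S^ℕ`: the set of turn orders for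
which `A` has a winning strategy in the infinite game. -/
def WShift {S : Type*} (X : Set (ℕ → S)) : Set (ℕ → Bool) :=
  { a | ∃ sA : List S → S, ∀ sB : List S → S, playInf sA sB a ∈ X }

/-- The shift map on one-directional configurations. -/
def shiftN {S : Type*} (x : ℕ → S) : ℕ → S := fun i => x (i + 1)

/-- The language `B(X)` of a set of one-directional configurations: all finite words
occurring as factors of its elements. -/
def langN {S : Type*} (X : Set (ℕ → S)) : Set (List S) :=
  { w | ∃ x ∈ X, ∃ i : ℕ, w = List.ofFn fun j : Fin w.length => x (i + j.val) }

/-- The factor of length `k` of `x` starting at `n`. -/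
def wsSeg {T : Type*} (x : ℕ → T) (n k : ℕ) : List T := List.ofFn fun j : Fin k => x (n + j.val)

theorem wsSeg_succ {T : Type*} (x : ℕ → T) (n k : ℕ) :
    wsSeg x n (k + 1) = x n :: wsSeg x (n + 1) k := by
  simp [wsSeg, List.ofFn_succ, Nat.add_assoc, Nat.add_comm 1]

theorem wsSeg_succ_last {T : Type*} (x : ℕ → T) (n k : ℕ) :
    wsSeg x n (k + 1) = wsSeg x n k ++ [x (n + k)] := by
  rw [wsSeg, List.ofFn_succ', List.concat_eq_append]
  simp [wsSeg]

theorem wsSeg_length {T : Type*} (x : ℕ → T) (n k : ℕ) : (wsSeg x n k).length = k := by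
  simp [wsSeg]

theorem mem_langN_iff {T : Type*} (X : Set (ℕ → T)) (w : List T) :
    w ∈ langN X ↔ ∃ x ∈ X, ∃ i k : ℕ, w = wsSeg x i k := by
  constructor
  · rintro ⟨x, hx, i, h⟩
    exact ⟨x, hx, i, w.length, h⟩
  · rintro ⟨x, hx, i, k, h⟩
    refine ⟨x, hx, i, ?_⟩
    have hk : w.length = k := by rw [h, wsSeg_length]
    subst hk
    exact h

theorem shift_mem {T : Type*} (X : Set (ℕ → T)) (h : ∀ x ∈ X, shiftN x ∈ X) (x : ℕ → T)
    (hx : x ∈ X) (i : ℕ) : (fun j => x (i + j)) ∈ X := by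
  induction i with
  | zero => simpa using hx
  | succ i ih =>
    have := h _ ih
    convert this using 1
    funext j
    simp only [shiftN]
    congr 1
    omega

theorem wsSeg_shift {T : Type*} (x : ℕ → T) (i k : ℕ) :
    wsSeg (fun j => x (i + j)) 0 k = wsSeg x i k := by
  simp [wsSeg]

/-- `A` wins the finite game with remaining turn order `u` from position `w`. -/
def wsWin {S : Type*} (L : Set (List S)) : List S → List Bool → Prop
  | w, [] => w ∈ L
  | w, true :: u => ∀ s, wsWin L (w ++ [s]) u
  | w, false :: u => ∃ s, wsWin L (w ++ [s]) u

theorem wsWin_mem {S : Type*} [Nonempty S] {L : Set (List S)}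
    (hL : ∀ w s, w ++ [s] ∈ L → w ∈ L) (u : List Bool) :
    ∀ w, wsWin L w u → w ∈ L := by
  induction u with
  | nil => intro w h; exact h
  | cons b u ih =>
    intro w h
    cases b with
    | true => exact hL w (Classical.arbitrary S) (ih _ (h _))
    | false => obtain ⟨s, hs⟩ := h; exact hL w s (ih _ hs)

theorem wsWin_initial {S : Type*} [Nonempty S] {L : Set (List S)}
    (hL : ∀ w s, w ++ [s] ∈ L → w ∈ L) (u v : List Bool) :
    ∀ w, wsWin L w (u ++ v) → wsWin L w u := by
  induction u with
  | nil => intro w h; exact wsWin_mem hL _ _ h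
  | cons b u ih =>
    intro w h
    cases b with
    | true => intro s; exact ih _ (h s)
    | false => obtain ⟨s, hs⟩ := h; exact ⟨s, ih _ hs⟩

theorem wsWin_extend {S : Type*} {L : Set (List S)}
    (hL : ∀ w ∈ L, ∃ s, w ++ [s] ∈ L) (u : List Bool) :
    ∀ w, wsWin L w u → wsWin L w (u ++ [false]) := by
  induction u with
  | nil => intro w h; exact hL w h
  | cons b u ih =>
    intro w h
    cases b with
    | true => intro s; exact ih _ (h s)
    | false => obtain ⟨s, hs⟩ := h; exact ⟨s, ih _ hs⟩

theorem wsSeg_initial {T : Type*} (x : ℕ → T) (n k l : ℕ) :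
    ∃ v, wsSeg x n (k + l) = wsSeg x n k ++ v := by
  induction l with
  | zero => exact ⟨[], by simp⟩
  | succ l ih =>
    obtain ⟨v, hv⟩ := ih
    exact ⟨v ++ [x (n + (k + l))], by rw [← Nat.add_assoc, wsSeg_succ_last, hv, List.append_assoc]⟩

theorem langN_initial {S : Type*} (X : Set (ℕ → S)) (w : List S) (s : S)
    (h : w ++ [s] ∈ langN X) : w ∈ langN X := by
  rw [mem_langN_iff] at h ⊢
  obtain ⟨x, hx, i, k, h⟩ := h
  refine ⟨x, hx, i, w.length, ?_⟩
  have hk : k = w.length + 1 := by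
    have := congrArg List.length h
    simpa [wsSeg_length] using this.symm
  rw [hk, wsSeg_succ_last] at h
  exact (List.append_inj h (by rw [wsSeg_length])).1

theorem langN_extend {S : Type*} (X : Set (ℕ → S)) (w : List S)
    (h : w ∈ langN X) : ∃ s, w ++ [s] ∈ langN X := by
  rw [mem_langN_iff] at h
  obtain ⟨x, hx, i, k, h⟩ := h
  exact ⟨x (i + k), (mem_langN_iff _ _).2 ⟨x, hx, i, k + 1, by rw [wsSeg_succ_last, h]⟩⟩

theorem mem_of_segs {S : Type*} [TopologicalSpace S] [DiscreteTopology S]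
    (X : Set (ℕ → S)) (hXcl : IsClosed X) (hXsh : ∀ x ∈ X, shiftN x ∈ X) (x : ℕ → S)
    (h : ∀ n, wsSeg x 0 n ∈ langN X) : x ∈ X := by
  by_contra hx
  obtain ⟨u, ⟨y, n, rfl⟩, hxu, hu⟩ :=
    (PiNat.isTopologicalBasis_cylinders (fun _ : ℕ => S)).exists_subset_of_mem_open
      (show x ∈ Xᶜ from hx) hXcl.isOpen_compl
  obtain ⟨z, hz, i, k, hk⟩ := (mem_langN_iff _ _).1 (h n)
  have hkn : n = k := by
    have := congrArg List.length hk
    simpa [wsSeg_length] using this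
  subst hkn
  refine hu (a := fun j => z (i + j)) ?_ (shift_mem X hXsh z hz i)
  rw [PiNat.mem_cylinder_iff] at hxu ⊢
  intro j hj
  rw [← hxu j hj]
  have := congrFun (List.ofFn_injective hk) ⟨j, hj⟩
  simpa using this.symm

theorem playPref_eq {S : Type*} (sA sB : List S → S) (a : ℕ → Bool) (n : ℕ) :
    playPref sA sB a n = wsSeg (playInf sA sB a) 0 n := by
  induction n with
  | zero => simp [playPref, wsSeg]
  | succ n ih => rw [wsSeg_succ_last, ← ih]; simp [playPref, playInf]

theorem playPref_length {S : Type*} (sA sB : List S → S) (a : ℕ → Bool) (n : ℕ) :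
    (playPref sA sB a n).length = n := by
  rw [playPref_eq, wsSeg_length]

open Classical in
theorem playPref_update {S : Type*} (sA sB : List S → S) (a : ℕ → Bool) (w : List S) (s : S)
    (n : ℕ) (hn : n ≤ w.length) :
    playPref sA (Function.update sB w s) a n = playPref sA sB a n := by
  induction n with
  | zero => rfl
  | succ n ih =>
    have hne : playPref sA sB a n ≠ w := by
      intro h
      have := playPref_length sA sB a n
      rw [h] at this
      omega
    simp only [playPref]
    rw [ih (by omega)]
    by_cases hb : a n <;> simp [hb, Function.update_of_ne hne]

/-- Winning strategy in the infinite game gives wins in all finite games. -/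
theorem wsWin_of_strategy {S : Type*} (X : Set (ℕ → S)) (a : ℕ → Bool) (sA : List S → S)
    (h : ∀ sB, playInf sA sB a ∈ X) (k : ℕ) :
    ∀ n sB, wsWin (langN X) (playPref sA sB a n) (wsSeg a n k) := by
  classical
  induction k with
  | zero =>
    intro n sB
    show playPref sA sB a n ∈ langN X
    rw [playPref_eq]
    exact (mem_langN_iff _ _).2 ⟨_, h sB, 0, n, rfl⟩
  | succ k ih =>
    intro n sB
    rw [wsSeg_succ]
    cases hb : a n with
    | false =>
      refine ⟨sA (playPref sA sB a n), ?_⟩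
      have := ih (n + 1) sB
      simpa [playPref, hb] using this
    | true =>
      intro s
      have := ih (n + 1) (Function.update sB (playPref sA sB a n) s)
      simp only [playPref, hb, if_true] at this
      rw [playPref_update _ _ _ _ _ _ (by rw [playPref_length])] at this
      simpa using this

/-- König step. -/
theorem wsWin_step {S : Type*} [Fintype S] [Nonempty S] {L : Set (List S)}
    (hL : ∀ w s, w ++ [s] ∈ L → w ∈ L) (a : ℕ → Bool) (n : ℕ) (w : List S)
    (hA : a n = false) (h : ∀ k, wsWin L w (wsSeg a n k)) :
    ∃ s, ∀ k, wsWin L (w ++ [s]) (wsSeg a (n + 1) k) := by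
  by_contra! hc
  choose f hf using hc
  have := h ((Finset.univ.sup f) + 1)
  rw [wsSeg_succ, hA] at this
  obtain ⟨s, hs⟩ := this
  have hle : f s ≤ Finset.univ.sup f := Finset.le_sup (Finset.mem_univ s)
  obtain ⟨l, hl⟩ := Nat.exists_eq_add_of_le hle
  obtain ⟨v, hv⟩ := wsSeg_initial a (n + 1) (f s) l
  rw [hl, hv] at hs
  exact hf s (wsWin_initial hL _ _ _ hs)

theorem mem_WShift_iff {S : Type*} [Fintype S] [Nonempty S]
    [TopologicalSpace S] [DiscreteTopology S]
    (X : Set (ℕ → S)) (hXcl : IsClosed X) (hXsh : ∀ x ∈ X, shiftN x ∈ X) (a : ℕ → Bool) :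
    a ∈ WShift X ↔ ∀ k, wsWin (langN X) [] (wsSeg a 0 k) := by
  classical
  constructor
  · rintro ⟨sA, h⟩ k
    exact wsWin_of_strategy X a sA h k 0 sA
  · intro h
    let P : List S → S → Prop := fun w s =>
      ∀ k, wsWin (langN X) (w ++ [s]) (wsSeg a (w.length + 1) k)
    let sA : List S → S := fun w => if hw : ∃ s, P w s then hw.choose else Classical.arbitrary S
    have hsA : ∀ w, (∃ s, P w s) → P w (sA w) := by
      intro w hw
      simp only [sA, dif_pos hw]
      exact hw.choose_spec
    refine ⟨sA, fun sB => mem_of_segs X hXcl hXsh _ ?_⟩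
    have key : ∀ n k, wsWin (langN X) (playPref sA sB a n) (wsSeg a n k) := by
      intro n
      induction n with
      | zero => exact h
      | succ n ih =>
        cases hb : a n with
        | false =>
          have h1 := wsWin_step (langN_initial X) a n _ hb ih
          have h2 := hsA (playPref sA sB a n) (by simpa [P, playPref_length] using h1)
          simpa [P, playPref_length, playPref, hb] using h2
        | true =>
          intro k
          have h1 := ih (k + 1)
          rw [wsSeg_succ, hb] at h1
          have h2 := h1 (sB (playPref sA sB a n))
          simpa [playPref, hb] using h2
    intro n
    rw [← playPref_eq]
    exact key n 0

theorem WShift_shift {S : Type*} [Nonempty S] (X : Set (ℕ → S))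
    (hXsh : ∀ x ∈ X, shiftN x ∈ X) (a : ℕ → Bool) (ha : a ∈ WShift X) :
    shiftN a ∈ WShift X := by
  classical
  obtain ⟨sA, h⟩ := ha
  let s0 : S := if a 0 then Classical.arbitrary S else sA []
  refine ⟨fun w => sA (s0 :: w), fun sB => ?_⟩
  let sB' : List S → S := fun w => if w = [] then s0 else sB w.tail
  have hp : ∀ n, playPref sA sB' a (n + 1) =
      s0 :: playPref (fun w => sA (s0 :: w)) sB (shiftN a) n := by
    intro n
    induction n with
    | zero =>
      by_cases hb : a 0 <;> simp [playPref, hb, sB', s0]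
    | succ n ih =>
      rw [playPref, ih]
      by_cases hb : a (n + 1) <;> simp [playPref, shiftN, hb, sB']
  convert hXsh _ (h sB') using 1
  funext i
  simp only [playInf, shiftN]
  rw [hp]
  by_cases hb : a (i + 1) <;> simp [shiftN, hb, sB']

theorem langN_WShift_iff {S : Type*} [Fintype S] [Nonempty S]
    [TopologicalSpace S] [DiscreteTopology S]
    (X : Set (ℕ → S)) (hXcl : IsClosed X) (hXsh : ∀ x ∈ X, shiftN x ∈ X) (w : List Bool) :
    w ∈ langN (WShift X) ↔ wsWin (langN X) [] w := by
  constructor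
  · intro h
    obtain ⟨a, ha, i, k, rfl⟩ := (mem_langN_iff _ _).1 h
    have h1 := shift_mem _ (WShift_shift X hXsh) a ha i
    have h2 := (mem_WShift_iff X hXcl hXsh _).1 h1 k
    rwa [wsSeg_shift] at h2
  · intro h
    have hr : ∀ k, wsWin (langN X) [] (w ++ List.replicate k false) := by
      intro k
      induction k with
      | zero => simpa using h
      | succ k ih =>
        rw [List.replicate_succ', ← List.append_assoc]
        exact wsWin_extend (langN_extend X) _ _ ih
    let a : ℕ → Bool := fun i => w.getD i false
    refine (mem_langN_iff _ _).2 ⟨a, (mem_WShift_iff X hXcl hXsh a).2 ?_, 0, w.length, ?_⟩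
    · intro k
      apply wsWin_initial (langN_initial X) _ ((w ++ List.replicate k false).drop k)
      have : wsSeg a 0 k = (w ++ List.replicate k false).take k := by
        apply List.ext_getElem
        · simp [wsSeg]
        · intro i h1 h2
          simp only [wsSeg, List.length_ofFn] at h1
          by_cases hi : i < w.length
          · simp [wsSeg, a, List.getElem_append, hi]
          · simp [wsSeg, a, List.getElem_append, hi, List.getElem?_eq_none (not_lt.1 hi)]
      rw [this, List.take_append_drop]
      exact hr k
    · apply List.ext_getElem
      · simp [wsSeg]
      · intro i h1 h2
        simp [wsSeg, a, h1]

/-- Controlled predecessor operator. -/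
def wsPre {S Q : Type*} (step : Q → S → Q) (b : Bool) (F : Set Q) : Set Q :=
  { q | if b then ∀ s, step q s ∈ F else ∃ s, step q s ∈ F }

theorem wsWin_eval {S Q : Type*} (M : DFA S Q) (u : List Bool) :
    ∀ w, wsWin (M.accepts : Set (List S)) w u ↔ M.eval w ∈ u.foldr (wsPre M.step) M.accept := by
  induction u with
  | nil => intro w; exact Iff.rfl
  | cons b u ih =>
    intro w
    cases b with
    | true => simp [wsWin, ih, wsPre]
    | false => simp [wsWin, ih, wsPre]

theorem wsWin_regular {S : Type*} (L : Language S) (h : L.IsRegular) :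
    Language.IsRegular ({u | wsWin (L : Set (List S)) [] u} : Language Bool) := by
  classical
  obtain ⟨Q, _, M, rfl⟩ := h
  let N : DFA Bool (Set Q → Set Q) :=
    { step := fun f b => fun F => f (wsPre M.step b F)
      start := id
      accept := {f | M.start ∈ f M.accept} }
  have hN : ∀ (u : List Bool) (f : Set Q → Set Q) (F : Set Q),
      N.evalFrom f u F = f (u.foldr (wsPre M.step) F) := by
    intro u
    induction u with
    | nil => intro f F; rfl
    | cons b u ih => intro f F; rw [DFA.evalFrom_cons, ih]; rfl
  refine ⟨Set Q → Set Q, inferInstance, N, ?_⟩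
  ext u
  show M.start ∈ N.evalFrom id u M.accept ↔ wsWin _ [] u
  rw [hN, wsWin_eval]
  rfl

/-- If `X ⊆ S^ℕ` is a sofic shift (a subshift whose language is
regular), then the winning shift `W(X)` is a sofic shift: it is a subshift over
`{A,B}` and its language is regular. -/
theorem winningShift_sofic {S : Type*} [Fintype S] [Nonempty S]
    [TopologicalSpace S] [DiscreteTopology S]
    (X : Set (ℕ → S)) (hXcl : IsClosed X) (hXsh : ∀ x ∈ X, shiftN x ∈ X)
    (hreg : Language.IsRegular (langN X : Language S)) :
    IsClosed (WShift X) ∧ (∀ a ∈ WShift X, shiftN a ∈ WShift X) ∧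
      Language.IsRegular (langN (WShift X) : Language Bool) := by
  refine ⟨?_, WShift_shift X hXsh, ?_⟩
  · have : WShift X = ⋂ k, {a | wsWin (langN X) [] (wsSeg a 0 k)} := by
      ext a
      rw [mem_WShift_iff X hXcl hXsh, Set.mem_iInter]
      rfl
    rw [this]
    refine isClosed_iInter fun k => ?_
    have hc : Continuous fun (a : ℕ → Bool) (j : Fin k) => a (0 + j.val) := by fun_prop
    exact (isClosed_discrete {f : Fin k → Bool | wsWin (langN X) [] (List.ofFn f)}).preimage hc
  · have : langN (WShift X) = {u | wsWin (langN X) [] u} := by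
      ext w
      exact langN_WShift_iff X hXcl hXsh w
    rw [this]
    exact wsWin_regular _ hreg
end

section
/- For all n ∈ ℕ and every set of binary words L ⊆ {0,1}^n, the winning set W(L) ⊆ {A,B}^n has the same cardinality as L: |L| = |W(L)|. -/
theorem playAux_length {S : Type*} (sA sB : List S → S) (a : List Bool) (w : List S) :
    (playAux sA sB a w).length = w.length + a.length := by
  induction a generalizing w with
  | nil => simp [playAux]
  | cons b t ih => simp [playAux, ih]; omega

theorem playAux_cons {S : Type*} (sA sB : List S → S) (c : S) (a : List Bool) (w : List S) :
    playAux sA sB a (c :: w)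
      = c :: playAux (fun t => sA (c :: t)) (fun t => sB (c :: t)) a w := by
  induction a generalizing w with
  | nil => simp [playAux]
  | cons b t ih => cases b <;> simp [playAux, ih]

theorem play_cons {S : Type*} (sA sB : List S → S) (b : Bool) (a : List Bool) :
    play sA sB (b :: a) = (if b then sB else sA) [] ::
      play (fun t => sA ((if b then sB else sA) [] :: t))
        (fun t => sB ((if b then sB else sA) [] :: t)) a := by
  simp [play, playAux, playAux_cons]

/-- The wordResidual set of words after the first letter. -/
def wordResidual (X : Set (List Bool)) (c : Bool) : Set (List Bool) := {w | c :: w ∈ X}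

theorem mem_Wset_false (X : Set (List Bool)) :
    wordResidual (Wset X) false = Wset (wordResidual X false) ∪ Wset (wordResidual X true) := by
  have key : ∀ a, false :: a ∈ Wset X ↔ ∃ c, a ∈ Wset (wordResidual X c) := by
    intro a
    constructor
    · rintro ⟨sA, h⟩
      refine ⟨sA [], fun t => sA (sA [] :: t), fun sB => ?_⟩
      have := h (fun w => sB w.tail)
      simpa [play_cons, wordResidual] using this
    · rintro ⟨c, sA, h⟩
      refine ⟨fun w => match w with | [] => c | _ :: t => sA t, fun sB => ?_⟩
      have := h (fun t => sB (c :: t))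
      simpa [play_cons, wordResidual] using this
  ext a
  have := key a
  simpa [wordResidual] using this

theorem mem_Wset_true (X : Set (List Bool)) :
    wordResidual (Wset X) true = Wset (wordResidual X false) ∩ Wset (wordResidual X true) := by
  have key : ∀ a, true :: a ∈ Wset X ↔ ∀ c, a ∈ Wset (wordResidual X c) := by
    intro a
    constructor
    · rintro ⟨sA, h⟩ c
      refine ⟨fun t => sA (c :: t), fun sB => ?_⟩
      have := h (fun w => match w with | [] => c | _ :: t => sB t)
      simpa [play_cons, wordResidual] using this
    · intro h
      choose sA h using h
      refine ⟨fun w => match w with | [] => false | c :: t => sA c t, fun sB => ?_⟩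
      have := h (sB []) (fun t => sB (sB [] :: t))
      simpa [play_cons, wordResidual] using this
  ext a
  have := key a
  simpa [wordResidual] using this

theorem finite_of_length {n : ℕ} {X : Set (List Bool)} (h : ∀ w ∈ X, w.length = n) :
    X.Finite := (List.finite_length_eq Bool n).subset h

theorem ncard_residual {n : ℕ} {X : Set (List Bool)} (h : ∀ w ∈ X, w.length = n + 1) :
    X.ncard = (wordResidual X false).ncard + (wordResidual X true).ncard := by
  have hr : ∀ c, ∀ w ∈ wordResidual X c, w.length = n := fun c w hw => by
    simpa using h _ hw
  have hX : X = List.cons false '' wordResidual X false ∪ List.cons true '' wordResidual X true := by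
    ext w
    rcases w with _ | ⟨c, t⟩
    · have : [] ∉ X := fun h0 => by simpa using h _ h0
      simp [this]
    · cases c <;> simp [wordResidual]
  conv_lhs => rw [hX]
  rw [Set.ncard_union_eq _ ((finite_of_length (hr _)).image _) ((finite_of_length (hr _)).image _),
    Set.ncard_image_of_injective _ List.cons_injective,
    Set.ncard_image_of_injective _ List.cons_injective]
  rw [Set.disjoint_left]
  rintro _ ⟨a, _, rfl⟩ ⟨b, _, hb⟩
  simp at hb

theorem Wset_length {n : ℕ} {X : Set (List Bool)} (h : ∀ w ∈ X, w.length = n) :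
    ∀ a ∈ Wset X, a.length = n := by
  rintro a ⟨sA, ha⟩
  have := h _ (ha (fun _ => false))
  simpa [play, playAux_length] using this

/-- For every `n` and every set `L ⊆ {0,1}^n` of binary words,
the winning set `W(L)` has the same cardinality as `L`. -/
theorem card_winningSet_binary (n : ℕ) (L : Set (List Bool))
    (hL : ∀ w ∈ L, w.length = n) :
    L.ncard = (Wset L).ncard := by
  induction n generalizing L with
  | zero =>
    congr 1
    ext w
    constructor
    · intro h
      obtain rfl := List.length_eq_zero_iff.1 (hL w h)
      exact ⟨fun _ => false, fun _ => h⟩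
    · intro h
      obtain rfl := List.length_eq_zero_iff.1 (Wset_length hL w h)
      obtain ⟨sA, h⟩ := h
      exact h (fun _ => false)
  | succ n ih =>
    have hr : ∀ c, ∀ w ∈ wordResidual L c, w.length = n := fun c w hw => by
      simpa using hL _ hw
    rw [ncard_residual hL, ncard_residual (Wset_length hL), mem_Wset_false, mem_Wset_true,
      Set.ncard_union_add_ncard_inter _ _ (finite_of_length (Wset_length (hr _)))
        (finite_of_length (Wset_length (hr _))), ih _ (hr _), ih _ (hr _)]
end
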